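/- Let q ≥ 3 be a prime power and let (P_i) be a sequence of integral convex polytopes with P_i ⊆ [0,q−2]^{n_i} and n_i → ∞. If there exists N such that the full Minkowski length satisfies L(P_i) ≤ q−3 for all i ≥ N, then the information rates tend to zero: R(P_i) = |P_i ∩ ℤ^{n_i}|/(q−1)^{n_i} → 0 as i → ∞. -/

import Mathlib

open Pointwise

/-- An integral convex polytope: the convex hull of a nonempty finite set of
integer lattice points. -/
def IsIntegralPolytope {n : ℕ} (P : Set (Fin n → ℝ)) : Prop :=
  ∃ V : Finset (Fin n → ℤ), V.Nonempty ∧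
    P = convexHull ℝ ((fun (v : Fin n → ℤ) (i : Fin n) => (v i : ℝ)) '' ↑V)

/-- `P ⊆ [0, q-2]^n`. -/
def InBox (q : ℕ) {n : ℕ} (P : Set (Fin n → ℝ)) : Prop :=
  ∀ x ∈ P, ∀ i, 0 ≤ x i ∧ x i ≤ (q : ℝ) - 2

/-- The integer lattice points of `P`. -/
def latticePoints {n : ℕ} (P : Set (Fin n → ℝ)) : Set (Fin n → ℝ) :=
  {x ∈ P | ∀ i, ∃ z : ℤ, x i = (z : ℝ)}

/-- A lattice polytope of positive dimension: an integral convex polytope that is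
not a single point. -/
def IsPosDimLatticePolytope {n : ℕ} (Q : Set (Fin n → ℝ)) : Prop :=
  IsIntegralPolytope Q ∧ ¬ Q.Subsingleton

/-- `L(P) ≥ N`: some lattice subpolytope of `P` is the Minkowski sum of at least `N`
lattice polytopes of positive dimension. -/
def HasMinkowskiLength {n : ℕ} (P : Set (Fin n → ℝ)) (N : ℕ) : Prop :=
  ∃ Q : Set (Fin n → ℝ), Q ⊆ P ∧ IsIntegralPolytope Q ∧
    ∃ l : ℕ, N ≤ l ∧ ∃ Qs : Fin l → Set (Fin n → ℝ),
      (∀ j, IsPosDimLatticePolytope (Qs j)) ∧ Q = ∑ j, Qs j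

/-! A lattice set `P ∩ ℤⁿ` with more than `mⁿ` points has two distinct points `a` and `b` that are
congruent modulo `m`, say `b = a + m • c`. If `P` is convex, it contains the segment from `a` to
`b`, which is the Minkowski sum of the segment from `a` to `a + c` and `m - 1` copies of the
segment from `0` to `c`; hence `L(P) ≥ m`. So `L(P) ≤ q - 3` forces `|P ∩ ℤⁿ| ≤ (q - 2)ⁿ`, and the
rate is at most `((q - 2) / (q - 1))ⁿ`. -/

section Segment

variable {𝕜 E : Type*} [Field 𝕜] [LinearOrder 𝕜] [IsStrictOrderedRing 𝕜]
  [AddCommGroup E] [Module 𝕜 E]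

theorem segment_add_smul_eq_vadd (x c : E) (t : 𝕜) :
    segment 𝕜 x (x + t • c) = x +ᵥ t • segment 𝕜 0 c := by
  have hsmul : t • segment 𝕜 0 c = segment 𝕜 (t • 0) (t • c) :=
    image_segment 𝕜 (LinearMap.lsmul 𝕜 E t).toAffineMap 0 c
  rw [hsmul, vadd_segment, smul_zero, vadd_eq_add, vadd_eq_add, add_zero]

theorem segment_add_segment_of_parallel (x y c : E) {s t : 𝕜} (hs : 0 ≤ s) (ht : 0 ≤ t) :
    segment 𝕜 x (x + s • c) + segment 𝕜 y (y + t • c) =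
      segment 𝕜 (x + y) (x + y + (s + t) • c) := by
  simp only [segment_add_smul_eq_vadd, (convex_segment 0 c).add_smul hs ht, vadd_add_vadd_comm]

theorem sum_segment_add {ι : Type*} (s : Finset ι) (v : ι → E) (c : E) :
    ∑ j ∈ s, segment 𝕜 (v j) (v j + c) =
      segment 𝕜 (∑ j ∈ s, v j) (∑ j ∈ s, v j + s.card • c) := by
  classical
  induction s using Finset.induction_on with
  | empty => simp [Set.singleton_zero]
  | insert j s hj ih =>
    have h := segment_add_segment_of_parallel (v j) (∑ i ∈ s, v i) c
      (zero_le_one' 𝕜) s.card.cast_nonneg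
    rw [Finset.sum_insert hj, Finset.sum_insert hj, Finset.card_insert_of_notMem hj, ih,
      add_comm s.card, add_nsmul, one_nsmul]
    simpa only [one_smul, add_smul, Nat.cast_smul_eq_nsmul] using h

end Segment

theorem encard_le_pow_of_add_nsmul {ι : Type*} [Fintype ι] {m : ℕ} [NeZero m]
    {S : Set (ι → ℤ)} (h : ∀ a c, a ∈ S → a + m • c ∈ S → c = 0) :
    S.encard ≤ (m ^ Fintype.card ι : ℕ) := by
  have hinj : S.InjOn fun a i => (a i : ZMod m) := by
    intro a ha b hb hab
    have hdvd : ∀ i, (m : ℤ) ∣ b i - a i := fun i =>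
      (ZMod.intCast_eq_intCast_iff_dvd_sub _ _ m).1 (congrFun hab i)
    choose c hc using hdvd
    have hb_eq : b = a + m • c := by
      ext i
      simp [← hc]
    have hc_zero : c = 0 := h a c ha (hb_eq ▸ hb)
    simp [hb_eq, hc_zero]
  calc S.encard ≤ (Set.univ : Set (ι → ZMod m)).encard :=
        Set.encard_le_encard_of_injOn (Set.mapsTo_univ _ _) hinj
    _ = (m ^ Fintype.card ι : ℕ) := by simp [ENat.card_eq_coe_fintype_card]

/-- The inclusion `ℤⁿ ⊆ ℝⁿ` as a homomorphism of additive groups, so that lattice points can be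
computed with over `ℤ`. -/
def latticeEmbedding (n : ℕ) : (Fin n → ℤ) →+ (Fin n → ℝ) :=
  (Int.castAddHom ℝ).compLeft (Fin n)

theorem latticeEmbedding_injective (n : ℕ) : Function.Injective (latticeEmbedding n) :=
  Int.cast_injective.comp_left

section Polytope

open Filter Topology

variable {n : ℕ} {P : Set (Fin n → ℝ)}

theorem latticePoints_eq_image_preimage (P : Set (Fin n → ℝ)) :
    latticePoints P = latticeEmbedding n '' (latticeEmbedding n ⁻¹' P) := by
  ext x
  rw [Set.image_preimage_eq_inter_range]
  refine and_congr_right fun _ => ?_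
  simp only [Set.mem_range, funext_iff, Classical.skolem, eq_comm (a := x _)]
  rfl

theorem IsIntegralPolytope.convex (hP : IsIntegralPolytope P) : Convex ℝ P := by
  obtain ⟨V, -, rfl⟩ := hP
  exact convex_convexHull ℝ _

theorem isIntegralPolytope_segment (a b : Fin n → ℤ) :
    IsIntegralPolytope (segment ℝ (latticeEmbedding n a) (latticeEmbedding n b)) := by
  classical
  refine ⟨{a, b}, Finset.insert_nonempty a {b}, ?_⟩
  rw [Finset.coe_pair, Set.image_pair, convexHull_pair]
  rfl

theorem isPosDimLatticePolytope_segment {a b : Fin n → ℤ} (hab : a ≠ b) :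
    IsPosDimLatticePolytope (segment ℝ (latticeEmbedding n a) (latticeEmbedding n b)) :=
  ⟨isIntegralPolytope_segment a b, fun h => hab <| latticeEmbedding_injective n <|
    h (left_mem_segment ℝ _ _) (right_mem_segment ℝ _ _)⟩

theorem hasMinkowskiLength_of_add_nsmul_mem {m : ℕ} [NeZero m] (hP : Convex ℝ P)
    {a c : Fin n → ℤ} (hc : c ≠ 0) (ha : latticeEmbedding n a ∈ P)
    (hb : latticeEmbedding n (a + m • c) ∈ P) : HasMinkowskiLength P m := by
  let v : Fin m → Fin n → ℤ := Pi.single 0 a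
  have hv : ∑ j, v j = a := by simp [v]
  refine ⟨_, hP.segment_subset ha hb, isIntegralPolytope_segment _ _, m, le_rfl,
    fun j => segment ℝ (latticeEmbedding n (v j)) (latticeEmbedding n (v j + c)),
    fun j => isPosDimLatticePolytope_segment (by simpa using hc), ?_⟩
  simp only [map_add, map_nsmul, sum_segment_add, ← map_sum, hv, Finset.card_univ,
    Fintype.card_fin]

theorem encard_latticePoints_le {m : ℕ} [NeZero m] (hP : Convex ℝ P)
    (hL : ¬ HasMinkowskiLength P m) : (latticePoints P).encard ≤ (m ^ n : ℕ) := by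
  rw [latticePoints_eq_image_preimage, (latticeEmbedding_injective n).encard_image]
  have hstep : ∀ a c, a ∈ latticeEmbedding n ⁻¹' P → a + m • c ∈ latticeEmbedding n ⁻¹' P →
      c = 0 := fun a c ha hb =>
    by_contra fun hc => hL (hasMinkowskiLength_of_add_nsmul_mem hP hc ha hb)
  simpa only [Fintype.card_fin] using encard_le_pow_of_add_nsmul hstep

theorem stmt18_general {ι : Type*} {F : Filter ι} {m : ℕ} [NeZero m] {r : ℝ} (hr : m < r)
    {n : ι → ℕ} (hn : Tendsto n F atTop) {P : ∀ i, Set (Fin (n i) → ℝ)}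
    (hP : ∀ i, Convex ℝ (P i)) (hL : ∀ᶠ i in F, ¬ HasMinkowskiLength (P i) m) :
    Tendsto (fun i => ((latticePoints (P i)).ncard : ℝ) / r ^ n i) F (𝓝 0) := by
  have hr_pos : 0 < r := m.cast_nonneg.trans_lt hr
  have hlim : Tendsto (fun i => (m / r) ^ n i) F (𝓝 0) :=
    (tendsto_pow_atTop_nhds_zero_of_lt_one (by positivity) ((div_lt_one hr_pos).2 hr)).comp hn
  refine squeeze_zero' (.of_forall fun i => by positivity) ?_ hlim
  filter_upwards [hL] with i hi
  have hcard : (latticePoints (P i)).ncard ≤ m ^ n i :=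
    ENat.toNat_le_of_le_natCast (encard_latticePoints_le (hP i) hi)
  rw [div_pow]
  gcongr
  exact_mod_cast hcard

end Polytope

/-- If a tail of the full Minkowski lengths `L(P_i)` is bounded above by `q - 3`
(i.e. from some index on, no `P_i` satisfies `L(P_i) ≥ q - 2`), then the information
rates tend to zero. -/
theorem stmt18 (q : ℕ) (hq : IsPrimePow q) (hq3 : 3 ≤ q)
    (n : ℕ → ℕ) (hn : Filter.Tendsto n Filter.atTop Filter.atTop)
    (P : ∀ i, Set (Fin (n i) → ℝ))
    (hpoly : ∀ i, IsIntegralPolytope (P i)) (hbox : ∀ i, InBox q (P i))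
    (N : ℕ) (hL : ∀ i, N ≤ i → ¬ HasMinkowskiLength (P i) (q - 2)) :
    Filter.Tendsto
      (fun i => ((latticePoints (P i)).ncard : ℝ) / ((q : ℝ) - 1) ^ (n i))
      Filter.atTop (nhds 0) := by
  have : NeZero (q - 2) := ⟨by omega⟩
  exact stmt18_general (by rw [Nat.cast_sub (by omega)]; norm_num) hn (fun i => (hpoly i).convex)
    (Filter.eventually_atTop.2 ⟨N, hL⟩)
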